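/- arXiv:1604.06708 — 4 statements merged into one kernel-verified Lean document; each statement's English description precedes it below -/
import Mathlib

section
/- Let $c_0 < 0$ be a real number and define, for integers $m \ge n \ge 0$, $\mu_0^{m,n}(c_0) = (-c_0)^n \sum_{k=0}^{m-n} \binom{n-1+k}{k}(1+c_0)^k$ (with the convention $\mu_0^{m,0}(c_0) = 1$, coming from the generalized binomial coefficient $\binom{k-1}{k}$ which equals $1$ for $k=0$ and $0$ for $k \ge 1$). Then for every real $t$ with $-1 < t < -\tfrac{2}{c_0} - 1$, the limit $\lim_{m\to\infty} \sum_{n=0}^{m} \mu_0^{m,n}(c_0)\,(-t)^n$ exists and equals $\tfrac{1}{1+t}$. -/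
open Filter Finset

/-- HAM coefficient `μ₀^{m,n}(c₀)`, with the convention `μ₀^{m,0}(c₀) = 1`. -/
noncomputable def mu0 (c0 : ℝ) (m n : ℕ) : ℝ :=
  if n = 0 then 1
  else (-c0) ^ n * ∑ k ∈ Finset.range (m - n + 1), ((n - 1 + k).choose k : ℝ) * (1 + c0) ^ k

/-! Expanding each power of `r = c₀ t + (1 + c₀)` by the binomial theorem and collecting the powers
of `c₀ t` shows that the `m`-th HAM sum is `1 + c₀ t (1 + r + ⋯ + r ^ (m - 1))`. As
`r - 1 = c₀ (1 + t)`, multiplying by `1 + t` sums the geometric series and gives `1 + t r ^ m`. The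
condition on `t` says exactly that `|r| < 1`. -/

theorem sum_range_add_pow_of_commute {R : Type*} [Semiring R] {x y : R} (h : Commute x y)
    (m : ℕ) :
    ∑ j ∈ range m, (x + y) ^ j =
      ∑ n ∈ range m, ∑ k ∈ range (m - n), x ^ n * y ^ k * (n + k).choose k := by
  rw [← sum_range_diag_flip m fun n k ↦ x ^ n * y ^ k * ((n + k).choose k : R)]
  refine sum_congr rfl fun j _ ↦ (h.add_pow j).trans (sum_congr rfl fun n hn ↦ ?_)
  have hnj : n ≤ j := mem_range_succ_iff.mp hn
  rw [Nat.add_sub_cancel' hnj, Nat.choose_symm hnj]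

theorem abs_one_add_mul_lt_one_iff_of_neg {K : Type*} [Field K] [LinearOrder K]
    [IsStrictOrderedRing K] {a x : K} (ha : a < 0) :
    |1 + a * x| < 1 ↔ 0 < x ∧ x < -2 / a := by
  rw [abs_lt, lt_div_iff_of_neg ha, ← smul_neg_iff_of_neg_left ha, smul_eq_mul, and_comm]
  constructor <;> rintro ⟨_, _⟩ <;> constructor <;> linarith

theorem mu0_zero (c0 : ℝ) (m : ℕ) : mu0 c0 m 0 = 1 :=
  if_pos rfl

theorem mu0_succ (c0 : ℝ) {m n : ℕ} (hn : n < m) :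
    mu0 c0 m (n + 1) =
      (-c0) ^ (n + 1) * ∑ k ∈ range (m - n), ((n + k).choose k : ℝ) * (1 + c0) ^ k := by
  have hmn : m - (n + 1) + 1 = m - n := by lia
  rw [mu0, if_neg n.succ_ne_zero, hmn, Nat.add_sub_cancel]

theorem sum_mu0_mul_neg_pow_eq_geom_sum (c0 t : ℝ) (m : ℕ) :
    ∑ n ∈ range (m + 1), mu0 c0 m n * (-t) ^ n =
      1 + c0 * t * ∑ j ∈ range m, (1 + c0 * (1 + t)) ^ j := by
  have hr : 1 + c0 * (1 + t) = c0 * t + (1 + c0) := by ring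
  rw [hr, sum_range_add_pow_of_commute (Commute.all _ _), sum_range_succ', mu0_zero, pow_zero,
    mul_one, add_comm, mul_sum]
  congr 1
  refine sum_congr rfl fun n hn ↦ ?_
  calc mu0 c0 m (n + 1) * (-t) ^ (n + 1)
      = (c0 * t) ^ (n + 1) * ∑ k ∈ range (m - n), ((n + k).choose k : ℝ) * (1 + c0) ^ k := by
        rw [mu0_succ c0 (mem_range.mp hn), mul_right_comm, ← mul_pow, neg_mul_neg]
    _ = c0 * t * ∑ k ∈ range (m - n), (c0 * t) ^ n * (1 + c0) ^ k * (n + k).choose k := by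
        rw [pow_succ', mul_assoc, mul_sum]
        exact congrArg _ (sum_congr rfl fun k _ ↦ by ring)

theorem one_add_mul_sum_mu0_mul_neg_pow (c0 t : ℝ) (m : ℕ) :
    (1 + t) * ∑ n ∈ range (m + 1), mu0 c0 m n * (-t) ^ n = 1 + t * (1 + c0 * (1 + t)) ^ m := by
  rw [sum_mu0_mul_neg_pow_eq_geom_sum]
  linear_combination t * mul_geom_sum (1 + c0 * (1 + t)) m

theorem ham_series_converges_of_c0_neg_general {c0 t : ℝ} (h : |1 + c0 * (1 + t)| < 1) :
    Tendsto (fun m : ℕ ↦ ∑ n ∈ range (m + 1), mu0 c0 m n * (-t) ^ n)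
      atTop (nhds (1 / (1 + t))) := by
  have ht : 1 + t ≠ 0 := by
    intro ht
    simp [ht] at h
  have hsum (m : ℕ) : ∑ n ∈ range (m + 1), mu0 c0 m n * (-t) ^ n =
      (1 + t * (1 + c0 * (1 + t)) ^ m) / (1 + t) :=
    eq_div_of_mul_eq ht ((mul_comm _ _).trans (one_add_mul_sum_mu0_mul_neg_pow c0 t m))
  have hpow := tendsto_pow_atTop_nhds_zero_of_abs_lt_one h
  simpa only [hsum, mul_zero, add_zero] using ((hpow.const_mul t).const_add 1).div_const (1 + t)

theorem ham_series_converges_of_c0_neg (c0 : ℝ) (hc0 : c0 < 0) (t : ℝ)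
    (ht1 : -1 < t) (ht2 : t < -2 / c0 - 1) :
    Tendsto (fun m : ℕ => ∑ n ∈ Finset.range (m + 1), mu0 c0 m n * (-t) ^ n)
      atTop (nhds (1 / (1 + t))) :=
  ham_series_converges_of_c0_neg_general <|
    (abs_one_add_mul_lt_one_iff_of_neg hc0).mpr ⟨by linarith, by linarith⟩
end

section
/- Let $c_0 > 0$ be a real number and define, for integers $m \ge n \ge 0$, $\mu_0^{m,n}(c_0) = (-c_0)^n \sum_{k=0}^{m-n} \binom{n-1+k}{k}(1+c_0)^k$ (with the convention $\mu_0^{m,0}(c_0) = 1$). Then for every real $t$ with $-\tfrac{2}{c_0} - 1 < t < -1$, the limit $\lim_{m\to\infty} \sum_{n=0}^{m} \mu_0^{m,n}(c_0)\,(-t)^n$ exists and equals $\tfrac{1}{1+t}$. -/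
open Filter Finset

/-!
Collecting the terms of the double sum with `n - 1 + k = i` and applying the binomial theorem turns
the `m`-th partial sum into `1 + c₀ t ∑_{i < m} rⁱ` with `r = c₀ t + (1 + c₀) = 1 + c₀ (1 + t)`.
When `|r| < 1` the geometric series gives the limit `1 + c₀ t / (1 - r) = 1 - t / (1 + t)`.
-/

/-- The HAM coefficient `μ₀^{m,n}(c₀)` over an arbitrary commutative ring, so that complex
convergence-control parameters are covered; over `ℝ` it unfolds to the same term as `mu0`. The case
`n = 0` is separate because `n - 1` is truncated subtraction. -/
def hamCoeff {R : Type*} [CommRing R] (c₀ : R) (m n : ℕ) : R :=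
  if n = 0 then 1
  else (-c₀) ^ n * ∑ k ∈ range (m - n + 1), ((n - 1 + k).choose k : R) * (1 + c₀) ^ k

theorem sum_range_pow_mul_sum_range_choose_mul_pow {R : Type*} [CommSemiring R] (x y : R) (m : ℕ) :
    ∑ j ∈ range m, x ^ j * ∑ k ∈ range (m - j), ((j + k).choose k : R) * y ^ k =
      ∑ i ∈ range m, (x + y) ^ i := by
  simp only [mul_sum]
  rw [← sum_range_diag_flip m fun j k ↦ x ^ j * (((j + k).choose k : R) * y ^ k)]
  refine sum_congr rfl fun i _ ↦ ?_
  rw [add_pow]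
  refine sum_congr rfl fun j hj ↦ ?_
  have hji : j ≤ i := mem_range_succ_iff.1 hj
  rw [Nat.add_sub_of_le hji, Nat.choose_symm hji, mul_left_comm, mul_comm]

section CommRing

variable {R : Type*} [CommRing R]

@[simp]
theorem hamCoeff_zero_right (c₀ : R) (m : ℕ) : hamCoeff c₀ m 0 = 1 := if_pos rfl

theorem hamCoeff_succ_mul_neg_pow (c₀ t : R) {m j : ℕ} (hj : j < m) :
    hamCoeff c₀ m (j + 1) * (-t) ^ (j + 1) =
      c₀ * t * ((c₀ * t) ^ j *
        ∑ k ∈ range (m - j), ((j + k).choose k : R) * (1 + c₀) ^ k) := by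
  have hlen : m - (j + 1) + 1 = m - j := by lia
  rw [hamCoeff, if_neg j.succ_ne_zero, hlen, Nat.add_sub_cancel, mul_right_comm, ← mul_pow,
    neg_mul_neg, pow_succ', mul_assoc]

theorem sum_range_hamCoeff_mul_neg_pow (c₀ t : R) (m : ℕ) :
    ∑ n ∈ range (m + 1), hamCoeff c₀ m n * (-t) ^ n =
      1 + c₀ * t * ∑ i ∈ range m, (1 + c₀ * (1 + t)) ^ i := by
  have hr : 1 + c₀ * (1 + t) = c₀ * t + (1 + c₀) := by ring
  rw [sum_range_succ', hamCoeff_zero_right, pow_zero, mul_one, add_comm, hr,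
    ← sum_range_pow_mul_sum_range_choose_mul_pow, mul_sum]
  congr 1
  exact sum_congr rfl fun j hj ↦ hamCoeff_succ_mul_neg_pow c₀ t (mem_range.1 hj)

end CommRing

theorem abs_one_add_mul_lt_one_iff {K : Type*} [Field K] [LinearOrder K] [IsStrictOrderedRing K]
    {c s : K} (hc : 0 < c) : |1 + c * s| < 1 ↔ -2 / c < s ∧ s < 0 := by
  rw [abs_lt, div_lt_iff₀' hc, ← smul_neg_iff_of_pos_left hc, smul_eq_mul]
  constructor <;> rintro ⟨hlower, hupper⟩ <;> constructor <;> linarith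

theorem ham_series_converges_of_c0_pos_general {𝕜 : Type*} [NormedField 𝕜] {c₀ t : 𝕜}
    (h : ‖1 + c₀ * (1 + t)‖ < 1) :
    Tendsto (fun m : ℕ ↦ ∑ n ∈ range (m + 1), hamCoeff c₀ m n * (-t) ^ n)
      atTop (nhds (1 / (1 + t))) := by
  have hprod : c₀ * (1 + t) ≠ 0 := fun h0 ↦ by simp [h0] at h
  obtain ⟨hc₀, ht⟩ := mul_ne_zero_iff.1 hprod
  have hlimit : 1 + c₀ * t * (1 - (1 + c₀ * (1 + t)))⁻¹ = 1 / (1 + t) := by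
    rw [sub_add_cancel_left]
    field_simp
    ring
  simp only [sum_range_hamCoeff_mul_neg_pow]
  rw [← hlimit]
  exact ((hasSum_geometric_of_norm_lt_one h).tendsto_sum_nat.const_mul (c₀ * t)).const_add 1

theorem ham_series_converges_of_c0_pos (c0 : ℝ) (hc0 : 0 < c0) (t : ℝ)
    (ht1 : -2 / c0 - 1 < t) (ht2 : t < -1) :
    Tendsto (fun m : ℕ => ∑ n ∈ Finset.range (m + 1), mu0 c0 m n * (-t) ^ n)
      atTop (nhds (1 / (1 + t))) :=
  ham_series_converges_of_c0_pos_general <|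
    (abs_one_add_mul_lt_one_iff hc0).2 ⟨by linarith, by linarith⟩
end

section
/- There exists a real constant $Q_2^{(C)}$ such that the polynomial $\varphi_2^{(C)}(y) = \tfrac{233y}{1890} - \tfrac{2179y^2}{3780} + \tfrac{83y^3}{126} - \tfrac{5y^4}{18} + \tfrac{y^5}{12} - \tfrac{y^6}{90}$ satisfies, for all real $y$, the differential equation $y^2 \dfrac{d^2\varphi_2^{(C)}}{dy^2}(y) = \varphi_1^{(C)}(y)\,S_1^{(C)}(y) + Q_2^{(C)} y^2$, where $\varphi_1^{(C)}(y) = -2y+2y^2$ and $S_1^{(C)}(y) = \tfrac{41y}{42} - y^2 + \tfrac{2y^3}{3} - \tfrac{y^4}{6}$, together with the boundary conditions $\varphi_2^{(C)}(0)=0$, $\varphi_2^{(C)}(1)=0$, and the normalization condition $-\int_0^1 \tfrac{1}{\epsilon}\,\varphi_2^{(C)}(\epsilon)\,d\epsilon = 0$. -/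
/-- First-order Chien perturbation solution `φ₁⁽ᶜ⁾`. -/
noncomputable def phi1C : ℝ → ℝ := fun y => -2 * y + 2 * y ^ 2

/-- First-order Chien perturbation solution `S₁⁽ᶜ⁾`. -/
noncomputable def S1C : ℝ → ℝ := fun y =>
  41 * y / 42 - y ^ 2 + 2 * y ^ 3 / 3 - y ^ 4 / 6

/-- Second-order Chien perturbation solution `φ₂⁽ᶜ⁾`. -/
noncomputable def phi2C : ℝ → ℝ := fun y =>
  233 * y / 1890 - 2179 * y ^ 2 / 3780 + 83 * y ^ 3 / 126 - 5 * y ^ 4 / 18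
    + y ^ 5 / 12 - y ^ 6 / 90

/-! The second-order deflection `W₂` satisfies `φ₂ = y W₂'`, so the normalization reads
`W₂ 0 - W₂ 1 = 0`, and both values vanish. Dividing the differential equation by `y ^ 2` turns it
into an identity of polynomials, whose constant term gives
`Q₂ = φ₂'' 0 + 2 * (41 / 42) = 1511 / 1890`. -/

open MeasureTheory Polynomial

theorem deriv_deriv_eval {𝕜 : Type*} [NontriviallyNormedField 𝕜] (p : 𝕜[X]) :
    deriv (deriv fun x => p.eval x) = fun x => p.derivative.derivative.eval x := by
  have deriv_eval (q : 𝕜[X]) : (deriv fun x => q.eval x) = fun x => q.derivative.eval x :=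
    funext fun _ => q.deriv
  rw [deriv_eval, deriv_eval]

theorem integral_mul_div_self {μ : Measure ℝ} [NullSingletonClass μ] (f : ℝ → ℝ) (a b : ℝ) :
    ∫ x in a..b, x * f x / x ∂μ = ∫ x in a..b, f x ∂μ := by
  refine intervalIntegral.integral_congr_ae ?_
  filter_upwards [μ.ae_ne 0] with x hx _
  exact mul_div_cancel_left₀ (f x) hx

theorem integral_eval_derivative (p : ℝ[X]) (a b : ℝ) :
    ∫ x in a..b, p.derivative.eval x = p.eval b - p.eval a :=
  intervalIntegral.integral_eq_sub_of_hasDerivAt (fun x _ => p.hasDerivAt x)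
    (p.derivative.continuous.intervalIntegrable a b)

/-- The second-order deflection `W₂⁽ᶜ⁾(y) = -∫_y^1 φ₂⁽ᶜ⁾(ε) / ε dε`, encoded as the polynomial
antiderivative of `φ₂⁽ᶜ⁾(y) / y` vanishing at the clamped edge `y = 1`. -/
noncomputable def W2C : ℝ[X] :=
  C (233 / 1890) * X - C (2179 / 7560) * X ^ 2 + C (83 / 378) * X ^ 3 - C (5 / 72) * X ^ 4
    + C (1 / 60) * X ^ 5 - C (1 / 540) * X ^ 6

theorem W2C_eval_zero : W2C.eval 0 = 0 := by
  simp [W2C]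

theorem W2C_eval_one : W2C.eval 1 = 0 := by
  norm_num [W2C]

theorem phi2C_eq_mul_derivative (y : ℝ) : phi2C y = y * W2C.derivative.eval y := by
  simp only [phi2C, W2C, derivative_sub, derivative_add, derivative_C_mul, derivative_X,
    derivative_X_pow, eval_sub, eval_add, eval_mul, eval_C, eval_one, eval_pow, eval_X]
  push_cast
  ring

theorem deriv_deriv_phi2C (y : ℝ) :
    deriv (deriv phi2C) y =
      (-2 + 2 * y) * (41 / 42 - y + 2 * y ^ 2 / 3 - y ^ 3 / 6) + 1511 / 1890 := by
  have phi2C_eq_eval : phi2C = fun x => (X * W2C.derivative).eval x := by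
    funext x
    rw [eval_mul, eval_X, phi2C_eq_mul_derivative]
  rw [phi2C_eq_eval, deriv_deriv_eval]
  simp only [W2C, derivative_sub, derivative_add, derivative_mul, derivative_C, derivative_zero,
    derivative_one, derivative_X, derivative_X_pow, eval_sub, eval_add, eval_mul, eval_C, eval_zero,
    eval_one, eval_pow, eval_X]
  push_cast
  ring

theorem integral_phi2C_div_self (a b : ℝ) :
    ∫ x in a..b, phi2C x / x = W2C.eval b - W2C.eval a := by
  simp only [phi2C_eq_mul_derivative, integral_mul_div_self, integral_eval_derivative]

theorem chien_phi2 :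
    ∃ Q2 : ℝ,
      (∀ y : ℝ, y ^ 2 * deriv (deriv phi2C) y = phi1C y * S1C y + Q2 * y ^ 2) ∧
      phi2C 0 = 0 ∧ phi2C 1 = 0 ∧
      -∫ x in (0:ℝ)..1, phi2C x / x = 0 := by
  refine ⟨1511 / 1890, fun y => ?ode, ?center, ?edge, ?normalization⟩
  case ode =>
    rw [deriv_deriv_phi2C, phi1C, S1C]
    ring
  case center => rw [phi2C_eq_mul_derivative, zero_mul]
  case edge => norm_num [phi2C]
  case normalization =>
    rw [integral_phi2C_div_self, W2C_eval_one, W2C_eval_zero, sub_zero, neg_zero]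
end

section
/- Let $\zeta, \lambda, \mu \in \mathbb{R}$ with $\lambda \ne 1$ and $\mu \ne 1$. Suppose $(\varphi_m^{(P)})_{m\ge 1}$, $(S_m^{(P)})_{m\ge 0}$ are twice-differentiable functions from $\mathbb{R}$ to $\mathbb{R}$ and $(Q_m^{(P)})_{m\ge 1}$, $(W_m^{(P)})_{m\ge 1}$ are real constants, with $S_0^{(P)} = 0$, satisfying for every $m \ge 1$ and every $y \in [0,1]$: $y^2 (\varphi_m^{(P)})''(y) = \sum_{i=1}^{m}\varphi_i^{(P)}(y)\,S_{m-i}^{(P)}(y) + Q_m^{(P)} y^2$; $y^2 (S_m^{(P)})''(y) = -\tfrac12\sum_{i=1}^{m}\varphi_i^{(P)}(y)\,\varphi_{m+1-i}^{(P)}(y)$; $\varphi_m^{(P)}(0) = S_m^{(P)}(0) = 0$; $\varphi_m^{(P)}(1) = \tfrac{\lambda}{\lambda-1}(\varphi_m^{(P)})'(1)$; $S_m^{(P)}(1) = \tfrac{\mu}{\mu-1}(S_m^{(P)})'(1)$; and $-\int_0^1 \tfrac{1}{\varepsilon}\varphi_m^{(P)}(\varepsilon)\,d\varepsilon = W_m^{(P)}$.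 Define $\tilde\varphi_0 = 0$, $\tilde S_0 = 0$, $\tilde Q_0 = 0$, $\tilde W_0 = 0$, and for $m \ge 1$: $\tilde\varphi_m = \zeta^{2m-1}\varphi_m^{(P)}$, $\tilde S_m = \zeta^{2m}S_m^{(P)}$, $\tilde Q_m = \zeta^{2m-1}Q_m^{(P)}$, $\tilde W_m = \zeta^{2m-1}W_m^{(P)}$. Then for every $m \ge 1$ and every $y \in [0,1]$ the HAM $m$th-order deformation equations with convergence-control parameter $c_0 = -1$ hold: $y^2\big(\tilde\varphi_m - \chi_m\tilde\varphi_{m-1}\big)''(y) = -\Big[y^2(\tilde\varphi_{m-1})''(y) - \sum_{i=1}^{m}\tilde\varphi_i(y)\tilde S_{m-i}(y) - \tilde Q_m y^2\Big]$ and $y^2\big(\tilde S_m - \chi_m\tilde S_{m-1}\big)''(y) = -\Big[y^2(\tilde S_{m-1})''(y) + \tfrac12\sum_{i=1}^{m}\tilde\varphi_i(y)\tilde\varphi_{m+1-i}(y)\Big]$, where $\chi_1 = 0$ and $\chi_m = 1$ for $m \ge 2$; moreover $\tilde\varphi_m(0) = \tilde S_m(0) = 0$, $\tilde\varphi_m(1)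 = \tfrac{\lambda}{\lambda-1}(\tilde\varphi_m)'(1)$, $\tilde S_m(1) = \tfrac{\mu}{\mu-1}(\tilde S_m)'(1)$, and $-\int_0^1 \tfrac{1}{\varepsilon}\tilde\varphi_m(\varepsilon)\,d\varepsilon = \tilde W_m$. -/
/-!
Two observations give the result. The equations of the perturbation hierarchy are homogeneous
for the weights `2 m - 1` (for `φ m`, `Q m`, `W m`) and `2 m` (for `S m`), so they survive the
rescaling by powers of `ζ`. Moreover, with `c₀ = -1` the terms containing the `(m - 1)`st iterate
on the two sides of the `m`th-order deformation equation cancel (for `m = 1` because the initial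
guess vanishes), which leaves precisely the `m`th equation of the hierarchy.
-/

open Finset

/-- `χ_m` in the HAM high-order deformation equations: `χ₁ = 0`, `χ_m = 1` for `m ≥ 2`. -/
noncomputable def chiHAM (m : ℕ) : ℝ := if m ≤ 1 then 0 else 1

section TwiceDifferentiable

open scoped Topology

variable {𝕜 F : Type*} [NontriviallyNormedField 𝕜] [NormedAddCommGroup F] [NormedSpace 𝕜 F]

/-- `f` is twice differentiable at `x`, with no continuity asked of the second derivative (unlike
`ContDiffAt 𝕜 2 f x`). The first derivative has to exist on a whole neighbourhood of `x`, for
otherwise `deriv f` would take junk values arbitrarily close to `x`. -/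
def TwiceDifferentiableAt (f : 𝕜 → F) (x : 𝕜) : Prop :=
  (∀ᶠ z in 𝓝 x, DifferentiableAt 𝕜 f z) ∧ DifferentiableAt 𝕜 (deriv f) x

namespace TwiceDifferentiableAt

variable {f g : 𝕜 → F} {x : 𝕜}

lemma of_differentiable (hf : Differentiable 𝕜 f ∧ Differentiable 𝕜 (deriv f)) :
    TwiceDifferentiableAt f x :=
  ⟨.of_forall hf.1, hf.2 x⟩

lemma const (c : F) : TwiceDifferentiableAt (fun _ : 𝕜 => c) x :=
  of_differentiable ⟨differentiable_const c, by simp only [deriv_const', differentiable_const]⟩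

lemma const_smul (c : 𝕜) (hf : TwiceDifferentiableAt f x) :
    TwiceDifferentiableAt (fun z => c • f z) x := by
  have deriv_smul : (deriv fun z => c • f z) = fun z => c • deriv f z :=
    funext fun _ => deriv_fun_const_smul_field c f
  refine ⟨hf.1.mono fun z hz => hz.const_smul c, ?_⟩
  rw [deriv_smul]
  exact hf.2.const_smul c

lemma deriv_deriv_fun_sub (hf : TwiceDifferentiableAt f x) (hg : TwiceDifferentiableAt g x) :
    deriv (deriv fun z => f z - g z) x = deriv (deriv f) x - deriv (deriv g) x := by
  have deriv_sub_near : (deriv fun z => f z - g z) =ᶠ[𝓝 x] fun z => deriv f z - deriv g z :=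
    (hf.1.and hg.1).mono fun z hz => deriv_fun_sub hz.1 hz.2
  rw [deriv_sub_near.deriv_eq, deriv_fun_sub hf.2 hg.2]

end TwiceDifferentiableAt

end TwiceDifferentiable

lemma chiHAM_mul_pred {a : ℕ → ℝ} (ha : a 0 = 0) (m : ℕ) :
    chiHAM m * a (m - 1) = a (m - 1) := by
  rcases le_or_gt m 1 with hm | hm
  · rw [Nat.sub_eq_zero_of_le hm, ha, mul_zero]
  · rw [chiHAM, if_neg hm.not_ge, one_mul]

/- The left-hand side is the `m`th-order deformation equation with `c₀ = -1` for the nonlinear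
equation `p * deriv (deriv u) = N`. -/
lemma deformation_eq_iff {u : ℕ → ℝ → ℝ} (hu : ∀ z, u 0 z = 0) {m : ℕ} {y : ℝ}
    (hm : TwiceDifferentiableAt (u m) y) (hpred : TwiceDifferentiableAt (u (m - 1)) y)
    (p N : ℝ) :
    p * deriv (deriv fun z => u m z - chiHAM m * u (m - 1) z) y
        = -(p * deriv (deriv (u (m - 1))) y - N) ↔
      p * deriv (deriv (u m)) y = N := by
  have chi_mul (z : ℝ) : chiHAM m * u (m - 1) z = u (m - 1) z :=
    chiHAM_mul_pred (a := fun k => u k z) (hu z) m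
  simp only [chi_mul]
  rw [hm.deriv_deriv_fun_sub hpred, mul_sub, neg_sub, sub_left_inj]

section Homogeneity

variable {R : Type*} [CommSemiring R] {r : R}

lemma sum_mul_eq_pow_mul_sum {ι : Type*} {s : Finset ι} {p q : ι → ℕ} {n : ℕ}
    {a b ta tb : ι → R} (hpq : ∀ i ∈ s, p i + q i = n)
    (ha : ∀ i ∈ s, ta i = r ^ p i * a i) (hb : ∀ i ∈ s, tb i = r ^ q i * b i) :
    ∑ i ∈ s, ta i * tb i = r ^ n * ∑ i ∈ s, a i * b i := by
  rw [mul_sum]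
  refine sum_congr rfl fun i hi => ?_
  rw [ha i hi, hb i hi, mul_mul_mul_comm, ← pow_add, hpq i hi]

variable {a b ta tb : ℕ → R}

lemma sum_odd_mul_even_eq_pow_mul_sum (ha : ∀ i, 1 ≤ i → ta i = r ^ (2 * i - 1) * a i)
    (hb : ∀ i, tb i = r ^ (2 * i) * b i) (m : ℕ) :
    ∑ i ∈ Icc 1 m, ta i * tb (m - i) = r ^ (2 * m - 1) * ∑ i ∈ Icc 1 m, a i * b (m - i) := by
  have weights : ∀ i ∈ Icc 1 m, (2 * i - 1) + 2 * (m - i) = 2 * m - 1 := by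
    intro i hi
    rw [mem_Icc] at hi
    lia
  exact sum_mul_eq_pow_mul_sum weights (fun i hi => ha i (mem_Icc.1 hi).1) fun i _ => hb (m - i)

lemma sum_odd_mul_odd_eq_pow_mul_sum (ha : ∀ i, 1 ≤ i → ta i = r ^ (2 * i - 1) * a i)
    (hb : ∀ i, 1 ≤ i → tb i = r ^ (2 * i - 1) * b i) (m : ℕ) :
    ∑ i ∈ Icc 1 m, ta i * tb (m + 1 - i)
      = r ^ (2 * m) * ∑ i ∈ Icc 1 m, a i * b (m + 1 - i) := by
  have weights : ∀ i ∈ Icc 1 m, (2 * i - 1) + (2 * (m + 1 - i) - 1) = 2 * m := by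
    intro i hi
    rw [mem_Icc] at hi
    lia
  have index_pos : ∀ i ∈ Icc 1 m, 1 ≤ m + 1 - i := by
    intro i hi
    rw [mem_Icc] at hi
    lia
  exact sum_mul_eq_pow_mul_sum weights (fun i hi => ha i (mem_Icc.1 hi).1) fun i hi =>
    hb (m + 1 - i) (index_pos i hi)

end Homogeneity

/-- The hierarchy of boundary value problems obtained by inserting
`φ = ∑ φ m ζ ^ (2 m - 1)`, `S = ∑ S m ζ ^ (2 m)`, `Q = ∑ Q m ζ ^ (2 m - 1)` and
`W(0) = ∑ W m ζ ^ (2 m - 1)`, with `m ≥ 1`, into the Von Kármán plate equations with boundary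
parameters `lam` and `mu`. The values `φ 0`, `Q 0` and `W 0` do not enter, but `S 0` does. -/
structure IsPerturbationHierarchy (lam mu : ℝ) (φ S : ℕ → ℝ → ℝ) (Q W : ℕ → ℝ) : Prop where
  φ_eq : ∀ m, 1 ≤ m → ∀ y ∈ Set.Icc (0 : ℝ) 1,
    y ^ 2 * deriv (deriv (φ m)) y = (∑ i ∈ Icc 1 m, φ i y * S (m - i) y) + Q m * y ^ 2
  S_eq : ∀ m, 1 ≤ m → ∀ y ∈ Set.Icc (0 : ℝ) 1,
    y ^ 2 * deriv (deriv (S m)) y = -(1 / 2) * ∑ i ∈ Icc 1 m, φ i y * φ (m + 1 - i) y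
  φ_zero : ∀ m, 1 ≤ m → φ m 0 = 0
  S_zero : ∀ m, 1 ≤ m → S m 0 = 0
  φ_one : ∀ m, 1 ≤ m → φ m 1 = lam / (lam - 1) * deriv (φ m) 1
  S_one : ∀ m, 1 ≤ m → S m 1 = mu / (mu - 1) * deriv (S m) 1
  deflection : ∀ m, 1 ≤ m → -∫ x in (0 : ℝ)..1, φ m x / x = W m

theorem IsPerturbationHierarchy.rescale {lam mu ζ : ℝ} {φ S tφ tS : ℕ → ℝ → ℝ}
    {Q W tQ tW : ℕ → ℝ} (h : IsPerturbationHierarchy lam mu φ S Q W)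
    (hφ : ∀ m, 1 ≤ m → tφ m = fun y => ζ ^ (2 * m - 1) * φ m y)
    (hS : ∀ m, tS m = fun y => ζ ^ (2 * m) * S m y)
    (hQ : ∀ m, 1 ≤ m → tQ m = ζ ^ (2 * m - 1) * Q m)
    (hW : ∀ m, 1 ≤ m → tW m = ζ ^ (2 * m - 1) * W m) :
    IsPerturbationHierarchy lam mu tφ tS tQ tW where
  φ_eq m hm y hy := by
    have hφy (i : ℕ) (hi : 1 ≤ i) := congrFun (hφ i hi) y
    have hSy (i : ℕ) := congrFun (hS i) y
    rw [sum_odd_mul_even_eq_pow_mul_sum hφy hSy, hφ m hm, hQ m hm, deriv_const_mul_field',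
      deriv_const_mul_field]
    linear_combination ζ ^ (2 * m - 1) * h.φ_eq m hm y hy
  S_eq m hm y hy := by
    have hφy (i : ℕ) (hi : 1 ≤ i) := congrFun (hφ i hi) y
    rw [sum_odd_mul_odd_eq_pow_mul_sum hφy hφy, hS m, deriv_const_mul_field',
      deriv_const_mul_field]
    linear_combination ζ ^ (2 * m) * h.S_eq m hm y hy
  φ_zero m hm := by simp only [hφ m hm, h.φ_zero m hm, mul_zero]
  S_zero m hm := by simp only [hS m, h.S_zero m hm, mul_zero]
  φ_one m hm := by
    simp only [hφ m hm, deriv_const_mul_field]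
    rw [h.φ_one m hm, mul_left_comm]
  S_one m hm := by
    simp only [hS m, deriv_const_mul_field]
    rw [h.S_one m hm, mul_left_comm]
  deflection m hm := by
    simp only [hφ m hm, mul_div_assoc, intervalIntegral.integral_const_mul]
    rw [hW m hm, ← h.deflection m hm, mul_neg]

/-- The perturbation method for an arbitrary perturbation quantity `ζ` applied to the
Von Kármán circular-plate equations is a special case of the HAM with
convergence-control parameter `c₀ = -1`. -/
theorem perturbation_is_special_case_of_HAM
    (ζ lam mu : ℝ) (hlam : lam ≠ 1) (hmu : mu ≠ 1)
    (φ S : ℕ → ℝ → ℝ) (Q W : ℕ → ℝ)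
    (hφdiff : ∀ m, Differentiable ℝ (φ m) ∧ Differentiable ℝ (deriv (φ m)))
    (hSdiff : ∀ m, Differentiable ℝ (S m) ∧ Differentiable ℝ (deriv (S m)))
    (hS0 : ∀ y : ℝ, S 0 y = 0)
    (hφeq : ∀ m, 1 ≤ m → ∀ y ∈ Set.Icc (0:ℝ) 1,
      y ^ 2 * deriv (deriv (φ m)) y
        = (∑ i ∈ Finset.Icc 1 m, φ i y * S (m - i) y) + Q m * y ^ 2)
    (hSeq : ∀ m, 1 ≤ m → ∀ y ∈ Set.Icc (0:ℝ) 1,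
      y ^ 2 * deriv (deriv (S m)) y
        = -(1 / 2) * ∑ i ∈ Finset.Icc 1 m, φ i y * φ (m + 1 - i) y)
    (hbc0 : ∀ m, 1 ≤ m → φ m 0 = 0 ∧ S m 0 = 0)
    (hbcφ1 : ∀ m, 1 ≤ m → φ m 1 = lam / (lam - 1) * deriv (φ m) 1)
    (hbcS1 : ∀ m, 1 ≤ m → S m 1 = mu / (mu - 1) * deriv (S m) 1)
    (hW : ∀ m, 1 ≤ m → -∫ x in (0:ℝ)..1, φ m x / x = W m)
    (tφ tS : ℕ → ℝ → ℝ) (tQ tW : ℕ → ℝ)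
    (htφ : ∀ y : ℝ, tφ 0 y = 0) (htS : ∀ y : ℝ, tS 0 y = 0)
    (htQ0 : tQ 0 = 0) (htW0 : tW 0 = 0)
    (htφm : ∀ m, 1 ≤ m → ∀ y : ℝ, tφ m y = ζ ^ (2 * m - 1) * φ m y)
    (htSm : ∀ m, 1 ≤ m → ∀ y : ℝ, tS m y = ζ ^ (2 * m) * S m y)
    (htQm : ∀ m, 1 ≤ m → tQ m = ζ ^ (2 * m - 1) * Q m)
    (htWm : ∀ m, 1 ≤ m → tW m = ζ ^ (2 * m - 1) * W m) :
    ∀ m, 1 ≤ m →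
      (∀ y ∈ Set.Icc (0:ℝ) 1,
        y ^ 2 * deriv (deriv (fun z => tφ m z - chiHAM m * tφ (m - 1) z)) y
          = -(y ^ 2 * deriv (deriv (tφ (m - 1))) y
              - (∑ i ∈ Finset.Icc 1 m, tφ i y * tS (m - i) y) - tQ m * y ^ 2)) ∧
      (∀ y ∈ Set.Icc (0:ℝ) 1,
        y ^ 2 * deriv (deriv (fun z => tS m z - chiHAM m * tS (m - 1) z)) y
          = -(y ^ 2 * deriv (deriv (tS (m - 1))) y
              + (1 / 2) * ∑ i ∈ Finset.Icc 1 m, tφ i y * tφ (m + 1 - i) y)) ∧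
      tφ m 0 = 0 ∧ tS m 0 = 0 ∧
      tφ m 1 = lam / (lam - 1) * deriv (tφ m) 1 ∧
      tS m 1 = mu / (mu - 1) * deriv (tS m) 1 ∧
      -∫ x in (0:ℝ)..1, tφ m x / x = tW m := by
  have tφ_eq (m : ℕ) (hm : 1 ≤ m) : tφ m = fun y => ζ ^ (2 * m - 1) * φ m y :=
    funext (htφm m hm)
  have tS_eq : ∀ m, tS m = fun y => ζ ^ (2 * m) * S m y
    | 0 => funext fun y => by rw [htS, hS0, mul_zero]
    | m + 1 => funext (htSm (m + 1) m.succ_pos)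
  have hierarchy : IsPerturbationHierarchy lam mu φ S Q W :=
    ⟨hφeq, hSeq, fun m hm => (hbc0 m hm).1, fun m hm => (hbc0 m hm).2, hbcφ1, hbcS1, hW⟩
  have rescaled : IsPerturbationHierarchy lam mu tφ tS tQ tW :=
    hierarchy.rescale tφ_eq tS_eq htQm htWm
  have tφ_diff (y : ℝ) : ∀ m, TwiceDifferentiableAt (tφ m) y
    | 0 => funext htφ ▸ TwiceDifferentiableAt.const 0
    | m + 1 => tφ_eq (m + 1) m.succ_pos ▸
        (TwiceDifferentiableAt.of_differentiable (hφdiff _)).const_smul _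
  have tS_diff (y : ℝ) (m : ℕ) : TwiceDifferentiableAt (tS m) y :=
    tS_eq m ▸ (TwiceDifferentiableAt.of_differentiable (hSdiff m)).const_smul _
  refine fun m hm => ⟨fun y hy => ?_, fun y hy => ?_, rescaled.φ_zero m hm, rescaled.S_zero m hm,
    rescaled.φ_one m hm, rescaled.S_one m hm, rescaled.deflection m hm⟩
  · rw [sub_sub, deformation_eq_iff htφ (tφ_diff y m) (tφ_diff y (m - 1))]
    exact rescaled.φ_eq m hm y hy
  · rw [← sub_neg_eq_add, ← neg_mul, deformation_eq_iff htS (tS_diff y m) (tS_diff y (m - 1))]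
    exact rescaled.S_eq m hm y hy
end
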